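/- arXiv:1710.09214 — 3 statements merged into one kernel-verified Lean document; each statement's English description precedes it below -/
import Mathlib

section
/- Let p be a prime and L a finite-dimensional Lie algebra over Q_p which is FAb, i.e. [L, L] = L, and let σ be an automorphism of L of prime order ℓ. Then the fixed-point subalgebra L_σ = {x ∈ L : σ(x) = x} is non-zero. -/
/-!
Suppose `σ` has no non-zero fixed vector. After extending scalars to an algebraic closure, the Lie
algebra is the sum of the eigenspaces of `σ`; the eigenvalues are `ℓ`-th roots of unity other than
`1`, and the bracket multiplies eigenvalues. If `x` is an eigenvector with eigenvalue `μ`, then `μ`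
is a primitive `ℓ`-th root of unity, so `ad x` applied repeatedly to any eigenvector eventually
lands in the eigenspace of `1`, which is zero: `ad x` is nilpotent (`isNilpotent_ad_of_eigenvector`).

The Killing form `κ` vanishes on a pair of eigenvectors `x`, `y` with eigenvalues `μ`, `ν`: if
`μ * ν ≠ 1` this is the `σ`-invariance of `κ`, and if `μ * ν = 1` then `⁅x, y⁆` is fixed by `σ`, so
it is zero, and `ad x * ad y` is nilpotent as a product of commuting nilpotents. Hence `κ = 0`
(`killingForm_eq_zero_of_fixedPointFree`), so the Lie algebra is solvable by Cartan's criterion;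
being also perfect and non-trivial, this is absurd.
-/

open scoped TensorProduct

section FixedPointFree

variable {K M : Type*} [Field K] [LieRing M] [LieAlgebra K M]
  {f : Module.End K M} {ℓ : ℕ}

lemma iSup_eigenspace_eq_top_of_pow_eq_one [IsAlgClosed K] [CharZero K] [FiniteDimensional K M]
    (hℓ : ℓ.Prime) (hpow : f ^ ℓ = 1) : ⨆ μ : K, f.eigenspace μ = ⊤ := by
  have hsep : (Polynomial.X ^ ℓ - 1 : Polynomial K).Separable :=
    Polynomial.X_pow_sub_one_separable_iff.mpr (Nat.cast_ne_zero.mpr hℓ.ne_zero)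
  exact (Module.End.isSemisimple_of_squarefree_aeval_eq_zero hsep.squarefree
    (by simp [hpow])).iSup_eigenspace_eq_top

lemma pow_apply_of_eigenvector {μ : K} {x : M} (hx : f x = μ • x) (n : ℕ) :
    (f ^ n) x = μ ^ n • x := by
  induction n with
  | zero => simp
  | succ n ih => rw [pow_succ', Module.End.mul_apply, ih, map_smul, hx, smul_smul, pow_succ]

lemma isNilpotent_ad_of_eigenvector [IsAlgClosed K] [CharZero K] [FiniteDimensional K M]
    (hℓ : ℓ.Prime) (hpow : f ^ ℓ = 1) (hbr : ∀ x y, f ⁅x, y⁆ = ⁅f x, f y⁆)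
    (hfix : ∀ x, f x = x → x = 0) {μ : K} {x : M} (hx : f x = μ • x) :
    IsNilpotent (LieAlgebra.ad K M x) := by
  rcases eq_or_ne x 0 with rfl | hx0
  · simp
  have root {ν : K} {z : M} (hz : f z = ν • z) (hz0 : z ≠ 0) : ν ^ ℓ = 1 := by
    have h := pow_apply_of_eigenvector hz ℓ
    rw [hpow, Module.End.one_apply] at h
    refine smul_left_injective K hz0 ?_
    simpa using h.symm
  have hμ : IsPrimitiveRoot μ ℓ := by
    have : Fact ℓ.Prime := ⟨hℓ⟩
    refine IsPrimitiveRoot.iff_orderOf.mpr (orderOf_eq_prime (root hx hx0) ?_)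
    rintro rfl
    exact hx0 (hfix x (by simpa using hx))
  refine ⟨ℓ, ?_⟩
  suffices h : (⊤ : Submodule K M) ≤ LinearMap.ker (LieAlgebra.ad K M x ^ ℓ) from
    LinearMap.ker_eq_top.mp (top_le_iff.mp h)
  rw [← iSup_eigenspace_eq_top_of_pow_eq_one hℓ hpow, iSup_le_iff]
  intro ν z hz
  rw [Module.End.mem_eigenspace_iff] at hz
  rw [LinearMap.mem_ker]
  rcases eq_or_ne z 0 with rfl | hz0
  · simp
  have hν := root hz hz0
  have hν0 : ν ≠ 0 := by
    rintro rfl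
    simp [hℓ.ne_zero] at hν
  have : NeZero ℓ := ⟨hℓ.ne_zero⟩
  obtain ⟨k, hk, hkν⟩ := hμ.eq_pow_of_pow_eq_one (ξ := ν⁻¹) (by rw [inv_pow, hν, inv_one])
  have key (n : ℕ) : f ((LieAlgebra.ad K M x ^ n) z) =
      (μ ^ n * ν) • (LieAlgebra.ad K M x ^ n) z := by
    induction n with
    | zero => simpa using hz
    | succ n ih =>
      rw [pow_succ', Module.End.mul_apply, LieAlgebra.ad_apply, hbr, ih, hx, smul_lie, lie_smul,
        smul_smul, pow_succ']
      congr 1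
      ring
  have hzero : (LieAlgebra.ad K M x ^ k) z = 0 :=
    hfix _ (by rw [key, hkν, inv_mul_cancel₀ hν0, one_smul])
  rw [← Nat.sub_add_cancel hk.le, pow_add, Module.End.mul_apply, hzero, map_zero]

lemma killingForm_eq_zero_of_fixedPointFree [IsAlgClosed K] [CharZero K] [FiniteDimensional K M]
    (hℓ : ℓ.Prime) (hpow : f ^ ℓ = 1) (hbr : ∀ x y, f ⁅x, y⁆ = ⁅f x, f y⁆)
    (hfix : ∀ x, f x = x → x = 0) : killingForm K M = 0 := by
  have hinv (n : ℕ) (hn : n + 1 = ℓ) (x : M) : f ((f ^ n) x) = x ∧ (f ^ n) (f x) = x := by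
    rw [← Module.End.mul_apply, ← Module.End.mul_apply, ← pow_succ', ← pow_succ, hn, hpow]
    simp
  have hn : ℓ - 1 + 1 = ℓ := Nat.sub_add_cancel hℓ.one_le
  let e : M ≃ₗ⁅K⁆ M :=
    { f with
      map_lie' := fun {x y} => hbr x y
      invFun := fun x => (f ^ (ℓ - 1)) x
      left_inv := fun x => (hinv _ hn x).2
      right_inv := fun x => (hinv _ hn x).1 }
  have he (x : M) : e x = f x := rfl
  have main {μ ν : K} {x y : M} (hx : f x = μ • x) (hy : f y = ν • y) :
      killingForm K M x y = 0 := by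
    by_cases hμν : μ * ν = 1
    · have hxy : ⁅x, y⁆ = 0 := hfix _ (by
        rw [hbr, hx, hy, smul_lie, lie_smul, smul_smul, hμν, one_smul])
      have hcomm : Commute (LieAlgebra.ad K M x) (LieAlgebra.ad K M y) := by
        ext z
        simp only [Module.End.mul_apply, LieAlgebra.ad_apply]
        rw [leibniz_lie x y z, hxy, zero_lie, zero_add]
      rw [killingForm_apply_apply, ← Module.End.mul_eq_comp]
      exact (LinearMap.isNilpotent_trace_of_isNilpotent (hcomm.isNilpotent_mul_right
        (isNilpotent_ad_of_eigenvector hℓ hpow hbr hfix hx))).eq_zero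
    · have h := LieAlgebra.killingForm_of_equiv_apply e x y
      rw [he, he, hx, hy, map_smul, map_smul, LinearMap.smul_apply, smul_smul, smul_eq_mul] at h
      have h' : (μ * ν - 1) * killingForm K M x y = 0 := by
        linear_combination h
      exact (mul_eq_zero.mp h').resolve_left (sub_ne_zero.mpr hμν)
  have htop := iSup_eigenspace_eq_top_of_pow_eq_one hℓ hpow
  have step {μ : K} {x : M} (hx : f x = μ • x) : killingForm K M x = 0 := by
    refine LinearMap.ker_eq_top.mp (top_le_iff.mp ?_)
    rw [← htop, iSup_le_iff]
    exact fun ν y hy => main hx (Module.End.mem_eigenspace_iff.mp hy)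
  refine LinearMap.ker_eq_top.mp (top_le_iff.mp ?_)
  rw [← htop, iSup_le_iff]
  exact fun μ x hx => step (Module.End.mem_eigenspace_iff.mp hx)

end FixedPointFree

lemma baseChange_lie {R A L : Type*} [CommRing R] [CommRing A] [Algebra R A] [LieRing L]
    [LieAlgebra R L] (f : Module.End R L) (hbr : ∀ x y, f ⁅x, y⁆ = ⁅f x, f y⁆) (x y : A ⊗[R] L) :
    f.baseChange A ⁅x, y⁆ = ⁅f.baseChange A x, f.baseChange A y⁆ := by
  induction x with
  | zero => simp
  | add x₁ x₂ h₁ h₂ => simp only [add_lie, map_add, h₁, h₂]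
  | tmul a x =>
    induction y with
    | zero => simp
    | add y₁ y₂ h₁ h₂ => simp only [lie_add, map_add, h₁, h₂]
    | tmul b y => simp [hbr]

/-- Having no fixed vector survives extension of scalars: it amounts to the vanishing of
`1 + f + ⋯ + f ^ (ℓ - 1)`, the image of which consists of fixed vectors. -/
lemma baseChange_fixedPointFree {k A V : Type*} [Field k] [Field A] [CharZero A] [Algebra k A]
    [AddCommGroup V] [Module k V] {ℓ : ℕ} (hℓ : ℓ ≠ 0) (f : Module.End k V) (hpow : f ^ ℓ = 1)
    (hfix : ∀ x, f x = x → x = 0) (x : A ⊗[k] V) (hx : f.baseChange A x = x) : x = 0 := by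
  have hsum : ∑ i ∈ Finset.range ℓ, f ^ i = 0 := by
    ext v
    refine hfix _ ?_
    have h : (f - 1) * ∑ i ∈ Finset.range ℓ, f ^ i = 0 := by
      rw [mul_geom_sum, hpow, sub_self]
    simpa [sub_eq_zero] using LinearMap.congr_fun h v
  have hsum' : ∑ i ∈ Finset.range ℓ, (f.baseChange A) ^ i = 0 := by
    have h := congrArg (Module.End.baseChangeHom k A V) hsum
    rw [map_sum, map_zero] at h
    simp only [map_pow] at h
    exact h
  have hpowx (i : ℕ) : ((f.baseChange A) ^ i) x = x := by
    induction i with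
    | zero => simp
    | succ i ih => rw [pow_succ, Module.End.mul_apply, hx, ih]
  have h := LinearMap.congr_fun hsum' x
  simp only [LinearMap.sum_apply, hpowx, Finset.sum_const, Finset.card_range,
    LinearMap.zero_apply] at h
  rw [← Nat.cast_smul_eq_nsmul A] at h
  exact (smul_eq_zero.mp h).resolve_left (Nat.cast_ne_zero.mpr hℓ)

/-- Let `p` be a prime and `L` a finite-dimensional Lie algebra over `ℚ_p`
which is FAb, i.e. `[L, L] = L`, and let `σ` be an automorphism of `L` (a linear automorphism
preserving the bracket) of prime order `ℓ`.  Then the fixed-point subalgebra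
`L_σ = {x ∈ L : σ(x) = x}` is non-zero. -/
theorem statement_11 (p ℓ : ℕ) [Fact p.Prime] (hℓ : ℓ.Prime)
    (L : Type*) [LieRing L] [LieAlgebra ℚ_[p] L] [FiniteDimensional ℚ_[p] L]
    (hFAb : ⁅(⊤ : LieIdeal ℚ_[p] L), (⊤ : LieIdeal ℚ_[p] L)⁆ = ⊤)
    (σ : L ≃ₗ[ℚ_[p]] L) (hbr : ∀ x y : L, σ ⁅x, y⁆ = ⁅σ x, σ y⁆)
    (hord : orderOf σ = ℓ) :
    ∃ x : L, x ≠ 0 ∧ σ x = x := by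
  by_contra! hcon
  -- A trivial `L` would force `σ = 1`, which does not have prime order.
  have hnt : Nontrivial L := by
    by_contra hL
    rw [not_nontrivial_iff_subsingleton] at hL
    have h1 : σ = 1 := LinearEquiv.ext fun x => Subsingleton.elim _ _
    rw [h1, orderOf_one] at hord
    exact hℓ.one_lt.ne hord
  set f : Module.End ℚ_[p] L := σ.toLinearMap
  have hfix (x : L) (hx : f x = x) : x = 0 := by
    by_contra h
    exact hcon x h hx
  have hpow : f ^ ℓ = 1 := by
    have h := congrArg (LinearEquiv.automorphismGroup.toLinearMapMonoidHom (R := ℚ_[p]) (M := L))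
      (hord ▸ pow_orderOf_eq_one σ)
    rw [map_pow, map_one] at h
    exact h
  let A := AlgebraicClosure ℚ_[p]
  have : CharZero A := charZero_of_injective_algebraMap (algebraMap ℚ_[p] A).injective
  have hpow' : (f.baseChange A) ^ ℓ = 1 := by
    have h := congrArg (Module.End.baseChangeHom ℚ_[p] A L) hpow
    rw [map_pow, map_one] at h
    exact h
  have hA : killingForm A (A ⊗[ℚ_[p]] L) = 0 :=
    killingForm_eq_zero_of_fixedPointFree hℓ hpow' (baseChange_lie f hbr)
      (baseChange_fixedPointFree hℓ.ne_zero f hpow hfix)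
  have hκ : killingForm ℚ_[p] L = 0 := by
    ext x y
    have h := LinearMap.congr_fun₂ hA (1 ⊗ₜ x) (1 ⊗ₜ y)
    rw [killingForm, LieModule.traceForm_baseChange] at h
    simpa using h
  have hsolv : LieAlgebra.IsSolvable L :=
    LieAlgebra.isSolvable_of_killingForm_apply_lie_eq_zero (R := ℚ_[p])
      fun x y _ => by rw [hκ]; rfl
  obtain ⟨k, hk⟩ := LieAlgebra.IsSolvable.solvable ℚ_[p] L
  rw [LieIdeal.derivedSeries_eq_top k hFAb] at hk
  obtain ⟨x, hx⟩ := exists_ne (0 : L)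
  have hmem : x ∈ (⊤ : LieIdeal ℚ_[p] L) := LieSubmodule.mem_top x
  rw [hk, LieSubmodule.mem_bot] at hmem
  exact hx hmem
end

section
/- Let p be a prime and L a finite-dimensional FAb Lie algebra over Q_p of dimension d, and let σ be an automorphism of L of order 2, with type t_σ(L) = (a, b) where a = dim ker(σ − id) and b = dim ker(σ + id). Then a ≠ 0 and b > 1; in particular a FAb Lie algebra admits no order-2 automorphism of type (d−1, 1). -/
/-!
Write `L = L₊ ⊕ L₋` for the eigenspaces of `σ`, so that `L₊ × L₊` and `L₋ × L₋` bracket into `L₊`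
and `L₊ × L₋` brackets into `L₋`. Because `L` is perfect, a subspace containing all brackets is
everything (`eq_top_of_forall_lie_mem`).

If `L₊ = 0`, the algebra is abelian, hence zero, and `σ` is the identity. If `L₋ = 0`, again `σ` is
the identity. If `L₋` is the line spanned by `v`, then `L₊` acts on it through a character.
Characters kill `[L₊, L₊]`, and `[L₋, L₋] = 0`, so the `L₊`-component of every bracket centralizes
`v`; by perfectness `[L₊, v] = 0`. Every bracket then lies in `[L₊, L₊] ⊆ L₊`, so `L = L₊`
and `σ` is the identity, contradicting that it has order two.
-/

section

variable {K L : Type*} [Field K] [LieRing L] [LieAlgebra K L]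

lemma eq_top_of_forall_lie_mem (h : ⁅(⊤ : LieIdeal K L), (⊤ : LieIdeal K L)⁆ = ⊤)
    (S : Submodule K L) (hS : ∀ x y : L, ⁅x, y⁆ ∈ S) : ∀ z, z ∈ S := by
  intro z
  have hz : z ∈ (⁅(⊤ : LieIdeal K L), (⊤ : LieIdeal K L)⁆).toSubmodule := by
    rw [h]; trivial
  rw [LieSubmodule.lieIdeal_oper_eq_linear_span'] at hz
  refine Submodule.span_le.2 ?_ hz
  rintro _ ⟨x, -, y, -, rfl⟩
  exact hS x y

lemma exists_eigen_decomp (h2 : (2 : K) ≠ 0) (σ : L →ₗ[K] L) (hσ : ∀ x, σ (σ x) = x) (x : L) :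
    ∃ u w, σ u = u ∧ σ w = -w ∧ x = u + w := by
  refine ⟨(2⁻¹ : K) • (x + σ x), (2⁻¹ : K) • (x - σ x), ?_, ?_, ?_⟩
  · rw [map_smul, map_add, hσ, add_comm]
  · rw [map_smul, map_sub, hσ, ← smul_neg, neg_sub]
  · rw [← smul_add, add_add_sub_cancel, ← two_smul K x, inv_smul_smul₀ h2]

/-- If the `-1`-eigenspace is at most a line, an involution of a perfect Lie algebra is trivial. -/
lemma eq_id_of_neg_eigenspace_le_line (h2 : (2 : K) ≠ 0)
    (h : ⁅(⊤ : LieIdeal K L), (⊤ : LieIdeal K L)⁆ = ⊤)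
    (σ : L →ₗ[K] L) (hbr : ∀ x y : L, σ ⁅x, y⁆ = ⁅σ x, σ y⁆) (hσ : ∀ x, σ (σ x) = x)
    (v : L) (hv : σ v = -v) (hline : ∀ w, σ w = -w → ∃ c : K, w = c • v) (z : L) : σ z = z := by
  have hact : ∀ u, σ u = u → ∃ c : K, ⁅u, v⁆ = c • v := fun u hu ↦
    hline _ (by rw [hbr, hu, hv, lie_neg])
  -- the subspace of elements whose `+1`-component commutes with `v`
  let f : L →ₗ[K] L :=
    { toFun := fun z ↦ ⁅z + σ z, v⁆
      map_add' := fun x y ↦ by simp only [map_add, add_lie]; abel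
      map_smul' := fun c x ↦ by simp only [map_smul, ← smul_add, smul_lie, RingHom.id_apply] }
  have hf : ∀ z, z ∈ LinearMap.ker f := by
    refine eq_top_of_forall_lie_mem h _ fun x y ↦ ?_
    obtain ⟨u, w, hu, hw, rfl⟩ := exists_eigen_decomp h2 σ hσ x
    obtain ⟨u', w', hu', hw', rfl⟩ := exists_eigen_decomp h2 σ hσ y
    obtain ⟨c, rfl⟩ := hline w hw
    obtain ⟨c', rfl⟩ := hline w' hw'
    obtain ⟨e, he⟩ := hact u hu
    obtain ⟨e', he'⟩ := hact u' hu'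
    have key : ⁅⁅u, u'⁆, v⁆ = 0 := by
      rw [lie_lie, he, he', lie_smul, lie_smul, he, he', smul_comm, sub_self]
    have hsum : ⁅u + c • v, u' + c' • v⁆ + σ ⁅u + c • v, u' + c' • v⁆ = ⁅u, u'⁆ + ⁅u, u'⁆ := by
      rw [hbr, map_add, map_add, hu, hu', hw, hw']
      simp only [add_lie, lie_add, neg_lie, lie_neg, smul_lie, lie_smul, lie_self, smul_zero, neg_zero]
      abel
    change ⁅_ + _, v⁆ = 0
    rw [hsum, add_lie, key, add_zero]
  have hcent : ∀ u, σ u = u → ⁅u, v⁆ = 0 := fun u hu ↦ by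
    have h0 : ⁅u + σ u, v⁆ = 0 := hf u
    rw [hu, ← two_smul K u, smul_lie] at h0
    exact (smul_eq_zero.1 h0).resolve_left h2
  have := eq_top_of_forall_lie_mem h (LinearMap.ker (σ - LinearMap.id)) (fun x y ↦ by
    obtain ⟨u, w, hu, hw, rfl⟩ := exists_eigen_decomp h2 σ hσ x
    obtain ⟨u', w', hu', hw', rfl⟩ := exists_eigen_decomp h2 σ hσ y
    obtain ⟨c, rfl⟩ := hline w hw
    obtain ⟨c', rfl⟩ := hline w' hw'
    have h1 : ⁅v, u'⁆ = 0 := by rw [← lie_skew, hcent u' hu', neg_zero]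
    have heq : ⁅u + c • v, u' + c' • v⁆ = ⁅u, u'⁆ := by
      simp [hcent u hu, h1]
    rw [heq, LinearMap.mem_ker, LinearMap.sub_apply, hbr, hu, hu', LinearMap.id_apply, sub_self]) z
  simpa [sub_eq_zero] using this

end

/-- Let `p` be a prime and `L` a finite-dimensional FAb Lie algebra over
`ℚ_p` of dimension `d`, and let `σ` be an automorphism of `L` of order `2`, of type
`t_σ(L) = (a, b)` where `a = dim ker(σ − id)` and `b = dim ker(σ + id)`.  Then `a ≠ 0` and
`b > 1`; in particular a FAb Lie algebra admits no order-2 automorphism of type `(d−1, 1)`. -/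
theorem statement_12 (p : ℕ) [Fact p.Prime]
    (L : Type*) [LieRing L] [LieAlgebra ℚ_[p] L] [FiniteDimensional ℚ_[p] L]
    (d : ℕ) (hd : Module.finrank ℚ_[p] L = d)
    (hFAb : ⁅(⊤ : LieIdeal ℚ_[p] L), (⊤ : LieIdeal ℚ_[p] L)⁆ = ⊤)
    (σ : L ≃ₗ[ℚ_[p]] L) (hbr : ∀ x y : L, σ ⁅x, y⁆ = ⁅σ x, σ y⁆)
    (hord : orderOf σ = 2)
    (a b : ℕ)
    (ha : a = Module.finrank ℚ_[p]
      ↥(LinearMap.ker ((σ : L →ₗ[ℚ_[p]] L) - (LinearMap.id : L →ₗ[ℚ_[p]] L))))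
    (hb : b = Module.finrank ℚ_[p]
      ↥(LinearMap.ker ((σ : L →ₗ[ℚ_[p]] L) + (LinearMap.id : L →ₗ[ℚ_[p]] L)))) :
    a ≠ 0 ∧ 1 < b ∧ ¬(a = d - 1 ∧ b = 1) := by
  have h2 : (2 : ℚ_[p]) ≠ 0 := two_ne_zero
  have hsq : σ ^ 2 = 1 := hord ▸ pow_orderOf_eq_one σ
  have hσ : ∀ x, σ (σ x) = x := fun x ↦ by
    have := congrArg (fun τ : L ≃ₗ[ℚ_[p]] L ↦ τ x) hsq
    simpa [pow_two] using this
  have hne : ¬ ∀ x, σ x = x := fun h ↦ by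
    have h1 : σ = 1 := LinearEquiv.ext h
    rw [h1, orderOf_one] at hord
    omega
  have hb1 : 1 < b := by
    by_contra hlt
    apply hne
    obtain ⟨⟨v, hv⟩, hspan⟩ := finrank_le_one_iff.1 (hb ▸ not_lt.1 hlt)
    refine eq_id_of_neg_eigenspace_le_line h2 hFAb (σ : L →ₗ[ℚ_[p]] L) hbr hσ v
      (eq_neg_of_add_eq_zero_left hv) fun w hw ↦ ?_
    obtain ⟨c, hc⟩ := hspan ⟨w, by simpa [eq_neg_iff_add_eq_zero] using hw⟩
    exact ⟨c, (congrArg Subtype.val hc).symm⟩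
  refine ⟨?_, hb1, fun h ↦ by omega⟩
  intro ha0
  rw [ha0, eq_comm, Submodule.finrank_eq_zero] at ha
  have hfix : ∀ x, σ x = x → x = 0 := fun x hx ↦ by
    have : x ∈ LinearMap.ker ((σ : L →ₗ[ℚ_[p]] L) - LinearMap.id) := by simp [hx]
    rwa [ha, Submodule.mem_bot] at this
  have hneg : ∀ x, σ x = -x := fun x ↦
    eq_neg_of_add_eq_zero_left (hfix _ (by rw [map_add, hσ, add_comm]))
  have hzero := eq_top_of_forall_lie_mem hFAb ⊥ fun x y ↦
    (Submodule.mem_bot _).2 (hfix _ (by rw [hbr, hneg, hneg, neg_lie, lie_neg, neg_neg]))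
  exact hne fun x ↦ by rw [(Submodule.mem_bot _).1 (hzero x), map_zero]
end

section
/- Let p be a prime and 𝒢 a finite group having a normal Sylow p-subgroup G with quotient Δ = 𝒢/G of order coprime to p. Let M be a finitely generated F_p[𝒢]-module. Then there is a uniquely determined non-negative integer t = t(M) such that M ≅ F_p[𝒢]^t ⊕ N with N a torsion F_p[𝒢]-module, and this t satisfies t ≥ dim_{F_p} M − (|𝒢| − 1)·r(M^G), where M^G is the F_p[Δ]-module of G-invariants of M and r(M^G) is its minimal number of generators as an F_p[Δ]-module. -/
/-!
Write `A = F_p[𝒢]` and `Δ = 𝒢 ⧸ G`.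

*Existence.* `A` is self-injective: `A`-linear maps `M → A` correspond to `F_p`-linear functionals
on `M`, so embeddings of free modules split (`exists_leftInverse_of_free`). Hence a free submodule
of maximal rank `t` has a complement, which is torsion (`exists_maximal_free`).

*Cancellation.* All modules are finite, and counting homomorphisms by their kernels shows that
finite direct summands cancel. It follows that if `A ^ a × N` surjects onto `A ^ b` with `a < b`,
then `N` contains a copy of `A`, so it is not torsion (`exists_injective_of_surjective`).
Consequently, if `M ≅ A ^ t ⊕ N` with `N` torsion and `M × A ^ q` surjects onto `A ^ b`, then
`b ≤ t + q` (`le_of_surjective`). Uniqueness of `t` is the case `q = 0`.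

*The bound.* Let `r = r(M^G)`. By Maschke's theorem for `Δ`, the generated module `M^G` embeds into
`F_p[Δ] ^ r`; the coefficients at `1` of this embedding are `r` functionals on `M^G`. Extended to
`M`, they define an `A`-linear map `M → A ^ r` which is injective on `M^G`, hence injective because
`G` is a `p`-group. If `q = r |𝒢| - dim M` is the codimension of `M` in `A ^ r`, then `M × A ^ q`
surjects onto `A ^ r`, so `r ≤ t + q`, which is the claimed inequality.
-/

/-- The sub-`F_p[𝒢]`-module (i.e. `𝒢`-stable `F_p`-subspace) generated by a set `s`. -/
def repSpan (p : ℕ) (𝒢 : Type*) [Group 𝒢] {V : Type*} [AddCommGroup V] [Module (ZMod p) V]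
    [DistribMulAction 𝒢 V] (s : Set V) : Submodule (ZMod p) V :=
  sInf {W : Submodule (ZMod p) V | s ⊆ W ∧ ∀ δ : 𝒢, ∀ v ∈ W, δ • v ∈ W}

/-- The left regular action of `𝒢` on the group algebra `F_p[𝒢]`. -/
noncomputable instance regularAction (p : ℕ) (𝒢 : Type*) [Group 𝒢] :
    DistribMulAction 𝒢 (MonoidAlgebra (ZMod p) 𝒢) where
  smul δ f := MonoidAlgebra.single δ 1 * f
  one_smul f := by
    show MonoidAlgebra.single (1 : 𝒢) 1 * f = f
    simp [MonoidAlgebra.one_def.symm]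
  mul_smul δ₁ δ₂ f := by
    show MonoidAlgebra.single (δ₁ * δ₂) 1 * f =
      MonoidAlgebra.single δ₁ 1 * (MonoidAlgebra.single δ₂ 1 * f)
    rw [← mul_assoc, MonoidAlgebra.single_mul_single, mul_one]
  smul_zero δ := by
    show MonoidAlgebra.single δ 1 * 0 = 0
    simp
  smul_add δ f g := by
    show MonoidAlgebra.single δ 1 * (f + g) = _ + _
    rw [mul_add]
    rfl

/-- The submodule of `G`-invariants `M^G` of an `F_p[𝒢]`-module `M`, for a subgroup
`G ≤ 𝒢`. -/
def invariants (p : ℕ) (𝒢 : Type*) [Group 𝒢] (G : Subgroup 𝒢) (M : Type*) [AddCommGroup M]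
    [Module (ZMod p) M] [DistribMulAction 𝒢 M] [SMulCommClass 𝒢 (ZMod p) M] :
    Submodule (ZMod p) M where
  carrier := {m : M | ∀ g ∈ G, g • m = m}
  add_mem' := by
    intro a b ha hb g hg
    rw [smul_add, ha g hg, hb g hg]
  zero_mem' := by
    intro g hg
    exact smul_zero g
  smul_mem' := by
    intro c m hm g hg
    rw [smul_comm, hm g hg]

/-! ### Cancellation for finite modules by counting homomorphisms -/

section Counting

variable {R : Type*} [Ring R]

theorem card_ker_eq {X P : Type*} [AddCommGroup X] [Module R X] [AddCommGroup P] [Module R P]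
    (K : Submodule R X) :
    Nat.card {f : X →ₗ[R] P // LinearMap.ker f = K} =
      Nat.card {f : X ⧸ K →ₗ[R] P // LinearMap.ker f = ⊥} :=
  Nat.card_congr
    { toFun := fun f => ⟨K.liftQ f.1 f.2.ge, Submodule.ker_liftQ_eq_bot _ _ _ f.2.le⟩
      invFun := fun g => ⟨g.1.comp K.mkQ, by rw [LinearMap.ker_comp, g.2]; simp⟩
      left_inv := fun f => by ext; simp
      right_inv := fun g => by ext; simp }

/-- Every homomorphism factors uniquely as a quotient map followed by an injection, so homomorphisms
are counted by summing over their kernels. -/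
theorem card_hom_eq_sum {X P : Type*} [AddCommGroup X] [Module R X] [AddCommGroup P] [Module R P]
    [Finite X] [Finite P] [Fintype (Submodule R X)] :
    Nat.card (X →ₗ[R] P) =
      ∑ K : Submodule R X, Nat.card {f : X →ₗ[R] P // LinearMap.ker f = K} := by
  have : Finite (X →ₗ[R] P) := DFunLike.finite _
  rw [← Nat.card_congr (Equiv.sigmaFiberEquiv
    (fun f : X →ₗ[R] P => LinearMap.ker f)), Nat.card_sigma]

/-- Lovász's argument: the numbers of homomorphisms from all finite `X` into `P` determine the
numbers of injections, by induction on `|X|`, since the homomorphisms `X → P` with kernel `K ≠ ⊥`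
are the injections of the smaller module `X ⧸ K`. -/
theorem card_inj_eq.{u} {P Q : Type*} [AddCommGroup P] [Module R P] [AddCommGroup Q] [Module R Q]
    [Finite P] [Finite Q]
    (h : ∀ (X : Type u) [AddCommGroup X] [Module R X] [Finite X],
      Nat.card (X →ₗ[R] P) = Nat.card (X →ₗ[R] Q))
    (X : Type u) [AddCommGroup X] [Module R X] [Finite X] :
    Nat.card {f : X →ₗ[R] P // LinearMap.ker f = ⊥} =
      Nat.card {f : X →ₗ[R] Q // LinearMap.ker f = ⊥} := by
  classical
  induction hn : Nat.card X using Nat.strong_induction_on generalizing X with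
  | _ n ih =>
    have : Finite (Submodule R X) := Finite.of_injective _ SetLike.coe_injective
    have := Fintype.ofFinite (Submodule R X)
    have hX := h X
    rw [card_hom_eq_sum, card_hom_eq_sum, ← Finset.add_sum_erase _ _ (Finset.mem_univ ⊥),
      ← Finset.add_sum_erase _ _ (Finset.mem_univ ⊥)] at hX
    have hs : ∀ K ∈ Finset.univ.erase (⊥ : Submodule R X),
        Nat.card {f : X →ₗ[R] P // LinearMap.ker f = K} =
          Nat.card {f : X →ₗ[R] Q // LinearMap.ker f = K} := by
      intro K hK
      rw [card_ker_eq (P := P) K, card_ker_eq (P := Q) K]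
      have : Finite (X ⧸ K) := Finite.of_surjective _ K.mkQ_surjective
      refine ih _ ?_ (X ⧸ K) rfl
      have hne : K ≠ ⊥ := Finset.ne_of_mem_erase hK
      have : Nontrivial K := Submodule.nontrivial_iff_ne_bot.2 hne
      have h1 : 1 < Nat.card K := Finite.one_lt_card
      have h2 : 0 < Nat.card (X ⧸ K) := Nat.card_pos
      rw [← hn, Submodule.card_eq_card_quotient_mul_card K]
      nlinarith
    rw [Finset.sum_congr rfl hs] at hX
    exact Nat.add_right_cancel hX

theorem card_hom_prod {X P Q : Type*} [AddCommGroup X] [Module R X] [AddCommGroup P] [Module R P]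
    [AddCommGroup Q] [Module R Q] :
    Nat.card (X →ₗ[R] P × Q) = Nat.card (X →ₗ[R] P) * Nat.card (X →ₗ[R] Q) := by
  rw [← Nat.card_prod]
  exact Nat.card_congr
    { toFun := fun f => (LinearMap.fst R P Q ∘ₗ f, LinearMap.snd R P Q ∘ₗ f)
      invFun := fun f => f.1.prod f.2
      left_inv := fun f => by ext <;> rfl
      right_inv := fun f => by ext <;> rfl }

/-- If `C × P ≃ C × Q`, then each finite `X` has equally many injections into `P` and into `Q`
(with `X = P` this would give `P ≃ Q`). -/
theorem card_inj_of_cancel.{u} {C P Q : Type*} [AddCommGroup C] [Module R C] [AddCommGroup P]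
    [Module R P] [AddCommGroup Q] [Module R Q] [Finite C] [Finite P] [Finite Q]
    (e : (C × P) ≃ₗ[R] (C × Q)) (X : Type u) [AddCommGroup X] [Module R X] [Finite X] :
    Nat.card {f : X →ₗ[R] P // LinearMap.ker f = ⊥} =
      Nat.card {f : X →ₗ[R] Q // LinearMap.ker f = ⊥} := by
  refine card_inj_eq (fun Y _ _ _ => ?_) X
  have : Finite (Y →ₗ[R] C) := DFunLike.finite _
  have h : Nat.card (Y →ₗ[R] C × P) = Nat.card (Y →ₗ[R] C × Q) :=
    Nat.card_congr
      { toFun := fun f => e.toLinearMap ∘ₗ f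
        invFun := fun f => e.symm.toLinearMap ∘ₗ f
        left_inv := fun f => by ext <;> simp
        right_inv := fun f => by ext <;> simp }
  rw [card_hom_prod, card_hom_prod] at h
  exact Nat.eq_of_mul_eq_mul_left Nat.card_pos h

/-- If `R ^ a × N` surjects onto `R ^ b` with `a < b`, then `N` contains a copy of `R`: the surjection
splits, so `R ^ a × N ≃ R ^ a × (R ^ (b - a) × ker f)`, and `R ^ a` cancels. -/
theorem exists_injective_of_surjective [Finite R] {N : Type*} [AddCommGroup N] [Module R N]
    [Finite N] {a b : ℕ} (hab : a < b) (f : ((Fin a → R) × N) →ₗ[R] (Fin b → R))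
    (hf : Function.Surjective f) : ∃ g : R →ₗ[R] N, Function.Injective g := by
  obtain ⟨c, rfl⟩ : ∃ c, b = a + (c + 1) := ⟨b - a - 1, by omega⟩
  obtain ⟨s, hs⟩ := Module.projective_lifting_property f LinearMap.id hf
  have hs' : ∀ x, f (s x) = x := fun x => LinearMap.congr_fun hs x
  let e₁ : ((Fin a → R) × N) ≃ₗ[R] ((Fin (a + (c + 1)) → R) × LinearMap.ker f) :=
    { toFun := fun x => (f x, ⟨x - s (f x), by simp [hs']⟩)
      invFun := fun y => s y.1 + y.2
      map_add' := fun x y => by ext <;> simp <;> abel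
      map_smul' := fun r x => by ext <;> simp [smul_sub]
      left_inv := fun x => by simp
      right_inv := fun y => by
        have : f y.2 = 0 := y.2.2
        ext <;> simp [hs', this] }
  let e₂ : (Fin (a + (c + 1)) → R) ≃ₗ[R] (Fin a → R) × (Fin (c + 1) → R) :=
    (LinearEquiv.funCongrLeft R R finSumFinEquiv).trans
      (LinearEquiv.sumArrowLequivProdArrow _ _ R R)
  let e := e₁.trans ((e₂.prodCongr (LinearEquiv.refl R _)).trans
    (LinearEquiv.prodAssoc R _ _ _))
  have hcard := card_inj_of_cancel e R
  let j : R →ₗ[R] (Fin (c + 1) → R) × LinearMap.ker f :=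
    LinearMap.inl R _ _ ∘ₗ LinearMap.single R (fun _ => R) 0
  have hj : LinearMap.ker j = ⊥ := LinearMap.ker_eq_bot.2
    (LinearMap.inl_injective.comp (Pi.single_injective (M := fun _ => R) 0))
  have : Finite (R →ₗ[R] (Fin (c + 1) → R) × LinearMap.ker f) := DFunLike.finite _
  have : Nonempty {f : R →ₗ[R] (Fin (c + 1) → R) × LinearMap.ker f // LinearMap.ker f = ⊥} :=
    ⟨⟨j, hj⟩⟩
  have hpos := Nat.card_pos (α := {f : R →ₗ[R] (Fin (c + 1) → R) × LinearMap.ker f //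
    LinearMap.ker f = ⊥})
  rw [← hcard] at hpos
  obtain ⟨g, hg⟩ := (Nat.card_pos_iff.1 hpos).1
  exact ⟨g, LinearMap.ker_eq_bot.1 hg⟩

end Counting

/-! ### Modules over the group algebra of a finite group -/

section GroupAlgebra

open MonoidAlgebra

variable {k : Type*} [Field k] {Γ : Type*} [Group Γ] [Finite Γ]

noncomputable def coindHom {M : Type*} [AddCommGroup M] [Module k M] [Module k[Γ] M]
    [IsScalarTower k k[Γ] M] (l : M →ₗ[k] k) : M →ₗ[k[Γ]] k[Γ] :=
  equivariantOfLinearOfComm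
    { toFun := fun m => ofCoeff (Finsupp.equivFunOnFinite.symm
        fun g => l (single g⁻¹ (1 : k) • m))
      map_add' := fun x y => by ext g; simp
      map_smul' := fun c x => by
        ext g
        simp [smul_comm (single g⁻¹ (1 : k)) c x] }
    fun g m => by
      ext h
      simp [smul_smul, single_mul_single]

/-- The `k[Γ]`-linear map `M → k[Γ]`, `m ↦ ∑ g, l (g⁻¹ m) g`, attached to a `k`-linear functional `l`
(Frobenius reciprocity for the regular representation). -/
theorem coindHom_coeff {M : Type*} [AddCommGroup M] [Module k M] [Module k[Γ] M]
    [IsScalarTower k k[Γ] M] (l : M →ₗ[k] k) (m : M) (g : Γ) :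
    (coindHom (Γ := Γ) l m).coeff g = l (single g⁻¹ (1 : k) • m) := rfl

/-- Self-injectivity of `k[Γ]`: an embedding of a free module splits. The coordinate functionals
`x ↦ coeff₁ (x j)` extend `k`-linearly to `M`, and `coindHom` turns the extensions into a retraction. -/
theorem exists_leftInverse_of_free {M : Type*} [AddCommGroup M] [Module k M] [Module k[Γ] M]
    [IsScalarTower k k[Γ] M] {ι : Type*} (i : (ι → k[Γ]) →ₗ[k[Γ]] M)
    (hi : Function.Injective i) : ∃ r : M →ₗ[k[Γ]] (ι → k[Γ]), ∀ x, r (i x) = x := by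
  obtain ⟨σ, hσ⟩ := (i.restrictScalars k).exists_leftInverse_of_injective
    (LinearMap.ker_eq_bot.2 hi)
  have hσ' : ∀ x, σ (i x) = x := fun x => LinearMap.congr_fun hσ x
  let c : ι → (ι → k[Γ]) →ₗ[k] k := fun j =>
    { toFun := fun x => (x j).coeff 1
      map_add' := fun x y => by simp
      map_smul' := fun a x => by simp }
  refine ⟨LinearMap.pi fun j => coindHom (c j ∘ₗ σ), fun x => ?_⟩
  ext j g
  rw [LinearMap.pi_apply, coindHom_coeff, ← map_smul i, LinearMap.comp_apply, hσ']
  change ((single g⁻¹ (1 : k) • x) j).coeff 1 = _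
  simp

/-- In the semisimple case, a module generated by a family indexed by `ι` embeds into `k[Γ] ^ ι`;
the embedding is expressed through its `k`-valued coefficients at `1`. -/
theorem exists_functionals {V : Type*} [AddCommGroup V] [Module k V] [Module k[Γ] V]
    [IsScalarTower k k[Γ] V] [NeZero (Nat.card Γ : k)] {ι : Type*} (v : ι → V)
    (hv : Submodule.span k[Γ] (Set.range v) = ⊤) :
    ∃ l : ι → V →ₗ[k] k, ∀ x : V, (∀ i (g : Γ), l i (single g (1 : k) • x) = 0) → x = 0 := by
  have : Module.Projective k[Γ] V := Module.projective_of_isSemisimpleRing _ _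
  have hsurj : Function.Surjective (Finsupp.linearCombination k[Γ] v) := by
    rw [← LinearMap.range_eq_top, Finsupp.range_linearCombination, hv]
  obtain ⟨s, hs⟩ := Module.projective_lifting_property
    (Finsupp.linearCombination k[Γ] v) LinearMap.id hsurj
  refine ⟨fun i =>
    { toFun := fun x => (s x i).coeff 1
      map_add' := fun x y => by simp
      map_smul' := fun a x => by
        rw [s.map_smul_of_tower a x]
        simp }, fun x hx => ?_⟩
  have h0 : s x = 0 := by
    ext i g
    have := hx i g⁻¹
    simpa using this
  have := LinearMap.congr_fun hs x
  simpa [h0] using this.symm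

/-- A free submodule of maximal rank splits off with torsion complement `ker r`: a torsion-free
element of `ker r` would enlarge it. -/
theorem exists_maximal_free {M : Type*} [AddCommGroup M] [Module k M] [Module k[Γ] M]
    [IsScalarTower k k[Γ] M] [Module.Finite k M] :
    ∃ (t : ℕ) (i : (Fin t → k[Γ]) →ₗ[k[Γ]] M) (r : M →ₗ[k[Γ]] (Fin t → k[Γ])),
      (∀ x, r (i x) = x) ∧ ∀ m, r m = 0 → ∃ a : k[Γ], a ≠ 0 ∧ a • m = 0 := by
  have hb : ∀ t : ℕ, (∃ i : (Fin t → k[Γ]) →ₗ[k[Γ]] M, Function.Injective i) →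
      t ≤ Module.finrank k M := by
    rintro t ⟨i, hi⟩
    let j : (Fin t → k) →ₗ[k] M := (i.restrictScalars k) ∘ₗ
      LinearMap.compLeft (Algebra.linearMap k k[Γ]) (Fin t)
    have hj : Function.Injective j := by
      refine hi.comp fun x y hxy => ?_
      ext n
      exact (algebraMap k k[Γ]).injective (congrFun hxy n)
    simpa using LinearMap.finrank_le_finrank_of_injective hj
  have hP0 : ∃ i : (Fin 0 → k[Γ]) →ₗ[k[Γ]] M, Function.Injective i :=
    ⟨0, Function.injective_of_subsingleton _⟩
  classical
  let P : ℕ → Prop := fun t => ∃ i : (Fin t → k[Γ]) →ₗ[k[Γ]] M, Function.Injective i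
  obtain ⟨t, ⟨i, hi⟩, hmax⟩ : ∃ t, P t ∧ ∀ t', P t' → t' ≤ t :=
    ⟨Nat.findGreatest P (Module.finrank k M), Nat.findGreatest_spec (Nat.zero_le _) hP0,
      fun t' ht' => Nat.le_findGreatest (hb _ ht') ht'⟩
  obtain ⟨r, hr⟩ := exists_leftInverse_of_free i hi
  refine ⟨t, i, r, hr, fun m hm => ?_⟩
  by_contra! hcon
  have hP : ∃ i : (Fin (t + 1) → k[Γ]) →ₗ[k[Γ]] M, Function.Injective i := by
    refine ⟨LinearMap.toSpanSingleton k[Γ] M m ∘ₗ LinearMap.proj 0 +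
      i ∘ₗ LinearMap.funLeft k[Γ] k[Γ] Fin.succ, ?_⟩
    refine (injective_iff_map_eq_zero _).2 fun x hx => ?_
    have hx' : x 0 • m + i (fun n => x n.succ) = 0 := hx
    have h1 : (fun n : Fin t => x n.succ) = 0 := by
      have := congrArg r hx'
      simpa [hr, hm] using this
    rw [h1, map_zero, add_zero] at hx'
    have h0 : x 0 = 0 := by
      by_contra h
      exact hcon _ h hx'
    ext n : 1
    refine Fin.cases h0 (fun n => congrFun h1 n) n
  exact absurd (hmax _ hP) (by omega)

/-- If the free part of `M` has rank `t` and `M × k[Γ] ^ q` surjects onto `k[Γ] ^ b`, then `b ≤ t + q`,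
because a torsion module contains no copy of `k[Γ]`. -/
theorem le_of_surjective [Finite k] {M : Type*} [AddCommGroup M] [Module k M] [Module k[Γ] M]
    [IsScalarTower k k[Γ] M] [Module.Finite k M] {t : ℕ}
    (r : M →ₗ[k[Γ]] (Fin t → k[Γ])) (i : (Fin t → k[Γ]) →ₗ[k[Γ]] M) (hri : ∀ x, r (i x) = x)
    (htors : ∀ m, r m = 0 → ∃ a : k[Γ], a ≠ 0 ∧ a • m = 0)
    {q b : ℕ} (f : (M × (Fin q → k[Γ])) →ₗ[k[Γ]] (Fin b → k[Γ]))
    (hf : Function.Surjective f) : b ≤ t + q := by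
  by_contra! hlt
  have : Finite M := Module.finite_of_finite k
  have : Finite k[Γ] := Finite.of_injective (fun x : k[Γ] => (x.coeff : Γ → k))
    fun x y h => by ext g; exact congrFun h g
  let φ : ((Fin (t + q) → k[Γ]) × LinearMap.ker r) →ₗ[k[Γ]] M × (Fin q → k[Γ]) :=
    ((i ∘ₗ LinearMap.funLeft _ _ (Fin.castAdd q) ∘ₗ LinearMap.fst _ _ _) +
      (LinearMap.ker r).subtype ∘ₗ LinearMap.snd _ _ _).prod
      (LinearMap.funLeft _ _ (Fin.natAdd t) ∘ₗ LinearMap.fst _ _ _)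
  have hφ : Function.Surjective φ := by
    rintro ⟨m, y⟩
    refine ⟨(Fin.append (r m) y, ⟨m - i (r m), by simp [hri]⟩), ?_⟩
    have h1 : (Fin.append (r m) y) ∘ Fin.castAdd q = r m := by ext n : 1; simp
    have h2 : (Fin.append (r m) y) ∘ Fin.natAdd t = y := by ext n : 1; simp
    ext : 1
    · change i ((Fin.append (r m) y) ∘ Fin.castAdd q) + (m - i (r m)) = m
      rw [h1]; abel
    · exact h2
  obtain ⟨g, hg⟩ := exists_injective_of_surjective hlt (f ∘ₗ φ) (hf.comp hφ)
  obtain ⟨a, ha, h⟩ := htors (g 1) (g 1).2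
  refine ha (hg ?_)
  rw [map_zero, ← mul_one a, ← smul_eq_mul, map_smul]
  exact Subtype.ext h

/-- If `M` embeds into `k[Γ] ^ b` with `k`-codimension `q`, then `q` further elements suffice to generate
`k[Γ] ^ b` together with `M`. -/
theorem exists_surjective_of_embedding {M : Type*} [AddCommGroup M] [Module k M] [Module k[Γ] M]
    [IsScalarTower k k[Γ] M] [Module.Finite k M] {b : ℕ} (j : M →ₗ[k[Γ]] (Fin b → k[Γ]))
    (hj : Function.Injective j) :
    ∃ (q : ℕ) (f : (M × (Fin q → k[Γ])) →ₗ[k[Γ]] (Fin b → k[Γ])),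
      Function.Surjective f ∧ Module.finrank k M + q = b * Nat.card Γ := by
  have : Fintype Γ := Fintype.ofFinite Γ
  have hfin : Module.Finite k k[Γ] := Module.Finite.equiv
    (coeffLinearEquiv k : k[Γ] ≃ₗ[k] (Γ →₀ k)).symm
  have hdim : Module.finrank k (Fin b → k[Γ]) = b * Nat.card Γ := by
    rw [Module.finrank_pi_fintype, (coeffLinearEquiv k : k[Γ] ≃ₗ[k] (Γ →₀ k)).finrank_eq]
    simp
  let j' : M →ₗ[k] (Fin b → k[Γ]) := j.restrictScalars k
  obtain ⟨C, hC⟩ := Submodule.exists_isCompl (LinearMap.range j')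
  let B := Module.finBasis k C
  refine ⟨Module.finrank k C, j.coprod (Fintype.linearCombination k[Γ] fun n => (B n : Fin b → k[Γ])),
    fun y => ?_, ?_⟩
  · obtain ⟨⟨_, ⟨m, rfl⟩⟩, c, rfl, -⟩ := Submodule.existsUnique_add_of_isCompl hC y
    refine ⟨(m, fun n => algebraMap k k[Γ] (B.repr c n)), ?_⟩
    have := congrArg (Submodule.subtype C) (B.sum_repr c)
    rw [map_sum] at this
    simp only [LinearMap.coprod_apply, Fintype.linearCombination_apply, algebraMap_smul]
    congr 1
  · rw [← hdim, ← Submodule.finrank_add_eq_of_isCompl hC,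
      LinearMap.finrank_range_of_inj (f := j') hj]

end GroupAlgebra

/-! ### Invariants under the normal `p`-subgroup -/

section Bridge

open MonoidAlgebra

variable {p : ℕ} {𝒢 : Type*} [Group 𝒢] {M : Type*} [AddCommGroup M]
  [Module (ZMod p) M] [DistribMulAction 𝒢 M]

theorem repSpan_le {s : Set M} {W : Submodule (ZMod p) M} (hs : s ⊆ W)
    (hW : ∀ g : 𝒢, ∀ v ∈ W, g • v ∈ W) : repSpan p 𝒢 s ≤ W :=
  sInf_le ⟨hs, hW⟩

variable [SMulCommClass 𝒢 (ZMod p) M]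

theorem smul_mem_invariants {G : Subgroup 𝒢} (hG : G.Normal) (g : 𝒢) {m : M}
    (hm : m ∈ invariants p 𝒢 G M) : g • m ∈ invariants p 𝒢 G M := by
  intro h hh
  have h1 := hm _ (hG.conj_mem' h hh g)
  calc h • g • m = g • ((g⁻¹ * h * g) • m) := by simp only [smul_smul]; congr 1; group
    _ = g • m := by rw [h1]

variable [Fact p.Prime]

/-- Maschke's theorem for `𝒢 ⧸ G` acting on `M^G`: if `s` generates `M^G`, there are functionals indexed
by `s` whose translates jointly separate the points of `M^G`. They are extended from `M^G` to `M`. -/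
theorem exists_functionals_invariants [Finite 𝒢] {G : Subgroup 𝒢} [hG : G.Normal]
    (hcop : ¬ p ∣ Nat.card (𝒢 ⧸ G)) (s : Finset M)
    (hs : (s : Set M) ⊆ invariants p 𝒢 G M)
    (hspan : repSpan p 𝒢 (s : Set M) = invariants p 𝒢 G M) :
    ∃ l : s → M →ₗ[ZMod p] ZMod p,
      ∀ x ∈ invariants p 𝒢 G M, (∀ i (g : 𝒢), l i (g • x) = 0) → x = 0 := by
  let ρ := Representation.ofDistribMulAction (ZMod p) 𝒢 M
  let σ := ρ.quotientToInvariants G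
  have hne : NeZero (Nat.card (𝒢 ⧸ G) : ZMod p) :=
    ⟨fun h => hcop ((ZMod.natCast_eq_zero_iff _ _).1 h)⟩
  have hinv : ∀ {x : M}, x ∈ invariants p 𝒢 G M →
      x ∈ Representation.invariants (ρ.comp G.subtype) := fun hx g => hx g g.2
  let v : s → σ.asModule := fun i => σ.asModuleEquiv.symm ⟨i, hinv (hs i.2)⟩
  have hact : ∀ (g : 𝒢) (x : σ.asModule),
      ((σ.asModuleEquiv (single (g : 𝒢 ⧸ G) (1 : ZMod p) • x) :
        Representation.invariants (ρ.comp G.subtype)) : M) = g • (σ.asModuleEquiv x : M) := by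
    intro g x
    rw [Representation.asModuleEquiv_map_smul, Representation.asAlgebraHom_single_one]
    rfl
  have hv : Submodule.span (ZMod p)[𝒢 ⧸ G] (Set.range v) = ⊤ := by
    let W : Submodule (ZMod p) M :=
      ((Submodule.span (ZMod p)[𝒢 ⧸ G] (Set.range v)).restrictScalars (ZMod p)).map
        ((Submodule.subtype _) ∘ₗ σ.asModuleEquiv.toLinearMap)
    have hW : invariants p 𝒢 G M ≤ W := by
      rw [← hspan]
      refine repSpan_le (fun i hi => ⟨v ⟨i, hi⟩, Submodule.subset_span ⟨_, rfl⟩, rfl⟩) ?_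
      rintro g _ ⟨y, hy, rfl⟩
      exact ⟨single (g : 𝒢 ⧸ G) (1 : ZMod p) • y,
        Submodule.smul_mem (Submodule.span (ZMod p)[𝒢 ⧸ G] (Set.range v)) _ hy, hact g y⟩
    refine eq_top_iff.2 fun x _ => ?_
    obtain ⟨y, hy, hyx⟩ := hW (x := (σ.asModuleEquiv x : M)) fun g hg =>
      (σ.asModuleEquiv x).2 ⟨g, hg⟩
    have : y = x := σ.asModuleEquiv.injective (Subtype.ext hyx)
    exact this ▸ hy
  obtain ⟨l, hl⟩ := exists_functionals v hv
  choose l' hl' using fun i =>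
    LinearMap.exists_extend (l i ∘ₗ σ.asModuleEquiv.symm.toLinearMap)
  refine ⟨l', fun x hx h => ?_⟩
  have := hl (σ.asModuleEquiv.symm ⟨x, hinv hx⟩) fun i g => by
    obtain ⟨g, rfl⟩ := QuotientGroup.mk_surjective g
    have h1 := LinearMap.congr_fun (hl' i)
      (σ.asModuleEquiv (single (g : 𝒢 ⧸ G) (1 : ZMod p) • σ.asModuleEquiv.symm ⟨x, hinv hx⟩))
    rw [LinearMap.comp_apply, LinearMap.comp_apply, Submodule.subtype_apply, hact] at h1
    simp only [LinearEquiv.apply_symm_apply, LinearEquiv.coe_coe,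
      LinearEquiv.symm_apply_apply] at h1
    rw [← h1]
    exact h i g
  exact congrArg Subtype.val ((LinearEquiv.map_eq_zero_iff _).1 this)

/-- `M^G` is essential: a `p`-group acting on a nonzero finite `F_p`-space has a nonzero fixed point. -/
theorem eq_bot_of_invariants [Module.Finite (ZMod p) M] {G : Subgroup 𝒢} (hGp : IsPGroup p G)
    (W : Submodule (ZMod p) M) (hW : ∀ g : 𝒢, ∀ m ∈ W, g • m ∈ W)
    (h : ∀ x ∈ W, x ∈ invariants p 𝒢 G M → x = 0) : W = ⊥ := by
  by_contra hne
  have : Finite M := Module.finite_of_finite (ZMod p)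
  let _ : MulAction G W :=
    { smul := fun g w => ⟨(g : 𝒢) • (w : M), hW g w w.2⟩
      one_smul := fun w => Subtype.ext (one_smul 𝒢 (w : M))
      mul_smul := fun g h w => Subtype.ext (mul_smul (g : 𝒢) (h : 𝒢) (w : M)) }
  have hcard : p ∣ Nat.card W := by
    rw [Module.natCard_eq_pow_finrank (K := ZMod p), Nat.card_zmod]
    refine dvd_pow_self p fun h0 => hne (Submodule.finrank_eq_zero.1 h0)
  have h0 : (0 : W) ∈ MulAction.fixedPoints G W := fun g => Subtype.ext (smul_zero (g : 𝒢))
  obtain ⟨b, hb, hb0⟩ := hGp.exists_fixed_point_of_prime_dvd_card_of_fixed_point W hcard h0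
  exact hb0 (Subtype.ext (h b b.2 fun g hg => congrArg Subtype.val (hb ⟨g, hg⟩)).symm)

end Bridge

/-- Let `𝒢` be a finite group with a normal Sylow `p`-subgroup `G` and
quotient `Δ = 𝒢/G` of order coprime to `p`, and let `M` be a finitely generated
`F_p[𝒢]`-module.  Then there is a uniquely determined `t ≥ 0` such that
`M ≅ F_p[𝒢]^t ⊕ N` with `N` torsion, and this `t` satisfies
`t ≥ dim_{F_p} M − (|𝒢| − 1)·r(M^G)`, where `r(M^G)` is the minimal number of generators of
the `F_p[Δ]`-module `M^G` of `G`-invariants. -/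
theorem statement_18 (p : ℕ) (hp : p.Prime) (𝒢 : Type*) [Group 𝒢] [Fintype 𝒢]
    (G : Subgroup 𝒢) (hGnormal : G.Normal) (hGp : IsPGroup p ↥G)
    (hcop : haveI := hGnormal; ¬ p ∣ Nat.card (𝒢 ⧸ G))
    (M : Type*) [AddCommGroup M] [Module (ZMod p) M] [DistribMulAction 𝒢 M]
    [SMulCommClass 𝒢 (ZMod p) M] [Module.Finite (ZMod p) M]
    (rMG : ℕ)
    (hrMG : rMG = sInf {m | ∃ s : Finset M, s.card = m ∧ (s : Set M) ⊆ invariants p 𝒢 G M ∧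
      repSpan p 𝒢 (s : Set M) = invariants p 𝒢 G M}) :
    ∃ t : ℕ,
      (∃ W₁ W₂ : Submodule (ZMod p) M,
        (∀ g : 𝒢, ∀ m ∈ W₁, g • m ∈ W₁) ∧ (∀ g : 𝒢, ∀ m ∈ W₂, g • m ∈ W₂) ∧
        IsCompl W₁ W₂ ∧
        (∃ ψ : (Fin t → MonoidAlgebra (ZMod p) 𝒢) →ₗ[ZMod p] M,
          Function.Injective ψ ∧ LinearMap.range ψ = W₁ ∧
          ∀ (g : 𝒢) (x : Fin t → MonoidAlgebra (ZMod p) 𝒢), ψ (g • x) = g • ψ x) ∧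
        (∀ m ∈ W₂, ∃ a : 𝒢 → ZMod p, a ≠ 0 ∧ ∑ g : 𝒢, a g • (g • m) = 0)) ∧
      (∀ t' : ℕ,
        (∃ W₁ W₂ : Submodule (ZMod p) M,
          (∀ g : 𝒢, ∀ m ∈ W₁, g • m ∈ W₁) ∧ (∀ g : 𝒢, ∀ m ∈ W₂, g • m ∈ W₂) ∧
          IsCompl W₁ W₂ ∧
          (∃ ψ : (Fin t' → MonoidAlgebra (ZMod p) 𝒢) →ₗ[ZMod p] M,
            Function.Injective ψ ∧ LinearMap.range ψ = W₁ ∧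
            ∀ (g : 𝒢) (x : Fin t' → MonoidAlgebra (ZMod p) 𝒢), ψ (g • x) = g • ψ x) ∧
          (∀ m ∈ W₂, ∃ a : 𝒢 → ZMod p, a ≠ 0 ∧ ∑ g : 𝒢, a g • (g • m) = 0)) → t' = t) ∧
      Module.finrank (ZMod p) M ≤ t + (Nat.card 𝒢 - 1) * rMG := by
  classical
  have : Fact p.Prime := ⟨hp⟩
  have : G.Normal := hGnormal
  have : Finite M := Module.finite_of_finite (ZMod p)
  let A := MonoidAlgebra (ZMod p) 𝒢
  let ρ := Representation.ofDistribMulAction (ZMod p) 𝒢 M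
  let _ : Module A M := Module.compHom M ρ.asAlgebraHom.toRingHom
  have hdef : ∀ (a : A) (m : M), a • m = ρ.asAlgebraHom a m := fun _ _ => rfl
  have hsingle : ∀ (g : 𝒢) (m : M), (MonoidAlgebra.single g (1 : ZMod p) : A) • m = g • m := by
    intro g m
    rw [hdef, Representation.asAlgebraHom_single_one]
    rfl
  have : IsScalarTower (ZMod p) A M := ⟨fun c a m => by simp [hdef]⟩
  have hsum : ∀ (a : A) (m : M), a • m = ∑ g : 𝒢, a.coeff g • (g • m) := by
    intro a m
    rw [hdef, Representation.asAlgebraHom_def, MonoidAlgebra.lift_apply,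
      Finsupp.sum_fintype _ _ (by simp)]
    simp [ρ]
  -- A decomposition as in the statement amounts to an `A`-linear split injection of `A ^ t`
  -- whose retraction has torsion kernel.
  have hdec : ∀ t' : ℕ,
      (∃ W₁ W₂ : Submodule (ZMod p) M,
        (∀ g : 𝒢, ∀ m ∈ W₁, g • m ∈ W₁) ∧ (∀ g : 𝒢, ∀ m ∈ W₂, g • m ∈ W₂) ∧
        IsCompl W₁ W₂ ∧
        (∃ ψ : (Fin t' → MonoidAlgebra (ZMod p) 𝒢) →ₗ[ZMod p] M,
          Function.Injective ψ ∧ LinearMap.range ψ = W₁ ∧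
          ∀ (g : 𝒢) (x : Fin t' → MonoidAlgebra (ZMod p) 𝒢), ψ (g • x) = g • ψ x) ∧
        (∀ m ∈ W₂, ∃ a : 𝒢 → ZMod p, a ≠ 0 ∧ ∑ g : 𝒢, a g • (g • m) = 0)) ↔
      ∃ (i : (Fin t' → A) →ₗ[A] M) (r : M →ₗ[A] (Fin t' → A)),
        (∀ x, r (i x) = x) ∧ ∀ m, r m = 0 → ∃ a : A, a ≠ 0 ∧ a • m = 0 := by
    intro t'
    constructor
    · rintro ⟨W₁, W₂, h₁, h₂, hc, ⟨ψ, hψ, hr, he⟩, htors⟩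
      let i : (Fin t' → A) →ₗ[A] M := MonoidAlgebra.equivariantOfLinearOfComm ψ fun g x => by
        rw [hsingle]; exact he g x
      have hi : ∀ x, i x = ψ x := fun _ => rfl
      -- The retraction `r` sends `m` to the unique `x` with `m - ψ x ∈ W₂`.
      have hex : ∀ m : M, ∃ x, m - ψ x ∈ W₂ := by
        intro m
        obtain ⟨⟨u, hu⟩, w, rfl, -⟩ := Submodule.existsUnique_add_of_isCompl hc m
        rw [← hr] at hu
        obtain ⟨x, rfl⟩ := hu
        exact ⟨x, by simp⟩
      have huniq : ∀ x, ψ x ∈ W₂ → x = 0 := by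
        intro x hx
        have : ψ x ∈ W₁ ⊓ W₂ := ⟨hr ▸ ⟨x, rfl⟩, hx⟩
        rw [hc.inf_eq_bot, Submodule.mem_bot] at this
        exact hψ (by simpa using this)
      have hW₂ : ∀ (a : A), ∀ m ∈ W₂, a • m ∈ W₂ := fun a m hm => by
        rw [hsum]
        exact Submodule.sum_mem _ fun g _ => W₂.smul_mem _ (h₂ g m hm)
      choose r hrW using hex
      have hrU : ∀ m x, m - ψ x ∈ W₂ → r m = x := fun m x hx =>
        sub_eq_zero.1 (huniq _ (by
          have := W₂.sub_mem hx (hrW m)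
          rw [map_sub]
          convert this using 1
          abel))
      have hadd : ∀ m n, r (m + n) = r m + r n := fun m n => hrU _ _ (by
        have := W₂.add_mem (hrW m) (hrW n)
        rw [map_add]
        convert this using 1
        abel)
      have hsmul : ∀ (a : A) (m : M), r (a • m) = a • r m := fun a m => hrU _ _ (by
        have := hW₂ a _ (hrW m)
        rw [smul_sub, ← hi, ← map_smul, hi] at this
        exact this)
      refine ⟨i, ⟨⟨r, hadd⟩, hsmul⟩, fun x => hrU _ _ ?_, fun m hm => ?_⟩
      · simp [hi]
      · have hm' : r m = 0 := hm
        have := hrW m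
        rw [hm', map_zero, sub_zero] at this
        obtain ⟨a, ha, h⟩ := htors m this
        refine ⟨MonoidAlgebra.ofCoeff (Finsupp.equivFunOnFinite.symm a), fun h0 => ha ?_, ?_⟩
        · ext g
          exact DFunLike.congr_fun (congrArg MonoidAlgebra.coeff h0) g
        · rw [hsum]
          exact h
    · rintro ⟨i, r, hri, htors⟩
      refine ⟨(LinearMap.range i).restrictScalars (ZMod p),
        (LinearMap.ker r).restrictScalars (ZMod p), ?_, ?_, ?_,
        ⟨i.restrictScalars (ZMod p), Function.LeftInverse.injective hri, ?_, ?_⟩, ?_⟩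
      · intro g m hm
        rw [← hsingle]
        exact Submodule.smul_mem (LinearMap.range i) _ hm
      · intro g m hm
        rw [← hsingle]
        exact Submodule.smul_mem (LinearMap.ker r) _ hm
      · rw [isCompl_iff, Submodule.disjoint_def, codisjoint_iff, eq_top_iff]
        refine ⟨?_, fun m _ => ?_⟩
        · rintro _ ⟨x, rfl⟩ hx
          have hx' : r (i x) = 0 := hx
          rw [hri] at hx'
          rw [hx', map_zero]
        · refine Submodule.mem_sup.2 ⟨i (r m), ⟨_, rfl⟩, m - i (r m), ?_, by abel⟩
          change r (m - i (r m)) = 0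
          rw [map_sub, hri, sub_self]
      · rfl
      · intro g x
        rw [← hsingle]
        exact map_smul i _ x
      · intro m hm
        obtain ⟨a, ha, h⟩ := htors m hm
        exact ⟨a.coeff, fun h0 => ha (by ext g; exact congrFun h0 g), by rw [← hsum, h]⟩
  obtain ⟨t, i, r, hri, htors⟩ := exists_maximal_free (k := ZMod p) (Γ := 𝒢) (M := M)
  refine ⟨t, (hdec t).2 ⟨i, r, hri, htors⟩, fun t' ht' => ?_, ?_⟩
  · obtain ⟨i', r', hri', htors'⟩ := (hdec t').1 ht'
    apply le_antisymm
    · exact le_of_surjective (q := 0) r i hri htors (r' ∘ₗ LinearMap.fst _ _ _)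
        fun x => ⟨(i' x, 0), hri' x⟩
    · exact le_of_surjective (q := 0) r' i' hri' htors' (r ∘ₗ LinearMap.fst _ _ _)
        fun x => ⟨(i x, 0), hri x⟩
  · -- The infimum defining `rMG` is attained: all of `M^G` is a finite generating set.
    obtain ⟨s, hcard, hs, hspan⟩ : rMG ∈ {m | ∃ s : Finset M, s.card = m ∧
        (s : Set M) ⊆ invariants p 𝒢 G M ∧
        repSpan p 𝒢 (s : Set M) = invariants p 𝒢 G M} := by
      rw [hrMG]
      apply Nat.sInf_mem
      have hfin := Set.toFinite (invariants p 𝒢 G M : Set M)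
      refine ⟨_, hfin.toFinset, rfl, by simp, le_antisymm ?_ ?_⟩
      · exact repSpan_le (by simp) fun g v hv => smul_mem_invariants hGnormal g hv
      · refine le_sInf fun W hW x hx => hW.1 ?_
        simpa using hx
    obtain ⟨l, hl⟩ := exists_functionals_invariants hcop s hs hspan
    let e : Fin rMG ≃ s := (Fintype.equivFinOfCardEq (by simpa using hcard)).symm
    let j : M →ₗ[A] (Fin rMG → A) := LinearMap.pi fun n => coindHom (l (e n))
    have hj : Function.Injective j := by
      have hbot := eq_bot_of_invariants hGp ((LinearMap.ker j).restrictScalars (ZMod p))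
        (fun g m hm => by
          rw [← hsingle]
          exact Submodule.smul_mem (LinearMap.ker j) _ hm)
        (fun x hx hxG => hl x hxG fun n g => by
          have h1 : (j x (e.symm n)).coeff g⁻¹ = 0 := by
            rw [show j x = 0 from hx]
            rfl
          rw [LinearMap.pi_apply, coindHom_coeff, hsingle] at h1
          simpa using h1)
      exact LinearMap.ker_eq_bot.1 ((Submodule.restrictScalars_eq_bot_iff _ _ _).1 hbot)
    obtain ⟨q, f, hf, hdim⟩ := exists_surjective_of_embedding (k := ZMod p) j hj
    have hle := le_of_surjective r i hri htors f hf
    have hpos : 0 < Nat.card 𝒢 := Nat.card_pos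
    obtain ⟨n, hn⟩ : ∃ n, Nat.card 𝒢 = n + 1 := ⟨_, (Nat.succ_pred_eq_of_pos hpos).symm⟩
    rw [hn] at hdim ⊢
    have : rMG * (n + 1) = n * rMG + rMG := by ring
    rw [Nat.add_sub_cancel]
    omega
end
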